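/- Consider n ≥ 3 agents with single-integrator dynamics ṗ_i = u_i in the plane under the control u = −∇(V_F + V_M)(p), and suppose Assumption 1 holds: G contains a spanning triangulated Laman subgraph L_n such that (L_n,p*) is strongly nondegenerate. Then the set 𝓔_M = {p ∈ ℝ^{2n} : p = p̃ + 1_n ⊗ ξ for some ξ ∈ ℝ²} is locally exponentially stable for the flow ṗ = −∇(V_F + V_M)(p): there exist a neighborhood N of 𝓔_M and constants C, λ > 0 such that every solution starting in N satisfies dist(p(t), 𝓔_M) ≤ C·e^{−λt}·dist(p(0), 𝓔_M) for all t ≥ 0 and converges to 𝓔_M. -/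

import Mathlib

open Matrix Real

noncomputable section

/-- Points in the plane. -/
abbrev Vec2 := Fin 2 → ℝ

/-- The configuration space `ℝ^{2n}` of `n` agents in the plane. -/
abbrev Conf (n : ℕ) := EuclideanSpace ℝ (Fin n × Fin 2)

/-- The position of agent `i` in a configuration (junk value `0` for `i ≥ n`). -/
noncomputable def pt {n : ℕ} (P : Conf n) (i : ℕ) : Vec2 :=
  fun d => if h : i < n then P (⟨i, h⟩, d) else 0

/-- Euclidean norm of a planar vector. -/
noncomputable def nrm (x : Vec2) : ℝ := Real.sqrt (x ⬝ᵥ x)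

/-- The bearing `g(x,y) = (x - y)/‖x - y‖`. -/
noncomputable def brg (x y : Vec2) : Vec2 := (nrm (x - y))⁻¹ • (x - y)

/-- Cosine of the angle at vertex `t.1` between the edges towards `t.2.1` and `t.2.2`. -/
noncomputable def angCosP {n : ℕ} (P : Conf n) (t : ℕ × ℕ × ℕ) : ℝ :=
  brg (pt P t.1) (pt P t.2.1) ⬝ᵥ brg (pt P t.1) (pt P t.2.2)

/-- The formation cost function `V_F`. -/
noncomputable def VF {n : ℕ} (TF : Finset (ℕ × ℕ × ℕ)) (Pstar P : Conf n) : ℝ :=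
  (1 / 2) * ∑ t ∈ TF, (angCosP P t - angCosP Pstar t) ^ 2

/-- The maneuvering cost `V_M(p) = (1/2)‖(p̃_{l1} − p̃_{l2}) − (p_{l1} − p_{l2})‖²`. -/
noncomputable def VM {n : ℕ} (l1 l2 : ℕ) (Ptilde P : Conf n) : ℝ :=
  (1 / 2) * (((pt Ptilde l1 - pt Ptilde l2) - (pt P l1 - pt P l2)) ⬝ᵥ
    ((pt Ptilde l1 - pt Ptilde l2) - (pt P l1 - pt P l2)))

/-- The 2×2 rotation matrix. -/
noncomputable def Ro (θ : ℝ) : Matrix (Fin 2) (Fin 2) ℝ :=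
  !![Real.cos θ, -Real.sin θ; Real.sin θ, Real.cos θ]

/-- Triangulated Laman graphs on vertex set `{0, …, n-1}` (edges stored as symmetric
pairs). -/
inductive IsTLGraph : ℕ → Finset (ℕ × ℕ) → Prop
  | base : IsTLGraph 2 {(0, 1), (1, 0)}
  | step {n : ℕ} {E : Finset (ℕ × ℕ)} {i j : ℕ} :
      IsTLGraph n E → (i, j) ∈ E →
      IsTLGraph (n + 1) (E ∪ {(n, i), (i, n), (n, j), (j, n)})

/-- A target framework is strongly nondegenerate if the points of every triangle of the
graph are not collinear. -/
def StronglyNondegP {n : ℕ} (E : Finset (ℕ × ℕ)) (P : Conf n) : Prop :=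
  ∀ i j k : ℕ, (i, j) ∈ E → (j, k) ∈ E → (i, k) ∈ E →
    ¬ Collinear ℝ ({pt P i, pt P j, pt P k} : Set Vec2)

/-!
The cost `V_F + V_M` is `½ ‖r‖²` for a residual `r` which vanishes at `p̃` and is invariant under
translations. The kernel of `r'(p̃)` consists of the translations only. Indeed, identify the plane
with `ℂ`: the cosine of the angle at `i` in the triangle `i j k` is `Re q / |q|`, where
`q = (z_k - z_i) / (z_j - z_i)` is not real, so a velocity `u` preserves it to first order iff
`(u_k - u_i) / (z_k - z_i)` and `(u_j - u_i) / (z_j - z_i)` have the same imaginary part. By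
induction on the triangulated Laman graph, `u_i = a z_i + b` for all `i`, and fixing the leader edge
forces `a = 0`.

Hence `r'(p̃)` is bounded below on the orthogonal complement of the translations, so close to `𝓔_M`
the gradient has inner product at least `m · dist²` with the displacement from `𝓔_M`, and Grönwall's
inequality for the squared distance gives the exponential decay.
-/

open Filter Topology InnerProductSpace

/-- Local exponential stability of the set `S` for the flow `x' = X x`, at rate `lam` in the
distance to `S`. Solutions are assumed, not asserted, to exist for all `t ≥ 0`. -/
def IsLocallyExponentiallyStable {F : Type*} [NormedAddCommGroup F] [NormedSpace ℝ F]
    (X : F → F) (S : Set F) : Prop :=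
  ∃ N : Set F, IsOpen N ∧ S ⊆ N ∧ ∃ C > (0 : ℝ), ∃ lam > (0 : ℝ),
    ∀ sol : ℝ → F, sol 0 ∈ N → (∀ t : ℝ, 0 ≤ t → HasDerivAt sol (X (sol t)) t) →
      (∀ t : ℝ, 0 ≤ t →
        Metric.infDist (sol t) S ≤ C * Real.exp (-lam * t) * Metric.infDist (sol 0) S) ∧
      Tendsto (fun t => Metric.infDist (sol t) S) atTop (𝓝 0)

section Decay

variable {φ φ' : ℝ → ℝ} {R k : ℝ}

lemma lt_of_deriv_le_neg_mul (hk : 0 < k) (hR : 0 < R) (hφ₀ : φ 0 < R)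
    (hcont : ContinuousOn φ (Set.Ici 0))
    (hderiv : ∀ t, 0 ≤ t → HasDerivWithinAt φ (φ' t) (Set.Ici t) t)
    (hdecay : ∀ t, 0 ≤ t → φ t < R → φ' t ≤ -k * φ t) {t : ℝ} (ht : 0 ≤ t) : φ t < R := by
  obtain ⟨c, hc, hcR⟩ := exists_between (max_lt hφ₀ hR)
  obtain ⟨hφc, hc₀⟩ := max_lt_iff.1 hc
  have hdecreasing : ∀ s ∈ Set.Ico 0 t, φ s = c → φ' s < 0 := fun s hs hsc =>
    calc φ' s ≤ -k * φ s := hdecay s hs.1 (hsc.trans_lt hcR)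
      _ = -(k * c) := by rw [hsc, neg_mul]
      _ < 0 := neg_neg_of_pos (mul_pos hk hc₀)
  have hφt : φ t ≤ c :=
    image_le_of_deriv_right_lt_deriv_boundary (B := fun _ => c)
      (hcont.mono Set.Icc_subset_Ici_self) (fun s hs => hderiv s hs.1) hφc.le
      (fun s => hasDerivAt_const s c) hdecreasing (Set.right_mem_Icc.2 ht)
  exact hφt.trans_lt hcR

lemma le_mul_exp_of_deriv_le_neg_mul (hk : 0 < k) (hR : 0 < R) (hφ₀ : φ 0 < R)
    (hcont : ContinuousOn φ (Set.Ici 0))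
    (hderiv : ∀ t, 0 ≤ t → HasDerivWithinAt φ (φ' t) (Set.Ici t) t)
    (hdecay : ∀ t, 0 ≤ t → φ t < R → φ' t ≤ -k * φ t) {t : ℝ} (ht : 0 ≤ t) :
    φ t ≤ φ 0 * Real.exp (-k * t) := by
  have hbound : ∀ s ∈ Set.Ico 0 t, φ' s ≤ -k * φ s + 0 := fun s hs => by
    simpa using hdecay s hs.1 (lt_of_deriv_le_neg_mul hk hR hφ₀ hcont hderiv hdecay hs.1)
  simpa [gronwallBound_ε0] using
    le_gronwallBound_of_liminf_deriv_right_le (hcont.mono Set.Icc_subset_Ici_self)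
      (fun s hs _ hr => (hderiv s hs.1).liminf_right_slope_le hr) le_rfl hbound t
      (Set.right_mem_Icc.2 ht)

end Decay

section AffineSubspace

variable {F : Type*} [NormedAddCommGroup F] [InnerProductSpace ℝ F]
  (T : Submodule ℝ F) [T.HasOrthogonalProjection] (p : F)

lemma infDist_mk' (x : F) :
    Metric.infDist x (AffineSubspace.mk' p T) = ‖Tᗮ.starProjection (x - p)‖ := by
  have hproj : p + T.starProjection (x - p) ∈ AffineSubspace.mk' p T := by
    simpa only [AffineSubspace.mem_mk', vsub_eq_sub, add_sub_cancel_left] using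
      T.starProjection_apply_mem (x - p)
  have horth : x - (p + T.starProjection (x - p)) = Tᗮ.starProjection (x - p) := by
    rw [Submodule.starProjection_orthogonal_val, sub_sub]
  refine le_antisymm ?_ ((Metric.le_infDist ⟨p, AffineSubspace.self_mem_mk' p T⟩).2 fun y hy => ?_)
  · rw [← horth, ← dist_eq_norm]
    exact Metric.infDist_le_dist_of_mem hproj
  · have hy' : Tᗮ.starProjection (y - p) = 0 :=
      Submodule.starProjection_orthogonal_apply_eq_zero hy
    calc ‖Tᗮ.starProjection (x - p)‖ = ‖Tᗮ.starProjection (x - y)‖ := by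
          rw [← sub_add_sub_cancel x y p, map_add, hy', add_zero]
      _ ≤ ‖x - y‖ := Submodule.norm_starProjection_apply_le _ _
      _ = dist x y := (dist_eq_norm x y).symm

variable {T p} {X : F → F} {δ m : ℝ}

lemma infDist_mk'_le_mul_exp (hδ : 0 < δ) (hm : 0 < m)
    (hX : ∀ x, ‖Tᗮ.starProjection (x - p)‖ < δ →
      ⟪X x, Tᗮ.starProjection (x - p)⟫_ℝ ≤ -m * ‖Tᗮ.starProjection (x - p)‖ ^ 2)
    {sol : ℝ → F} (hsol₀ : Metric.infDist (sol 0) (AffineSubspace.mk' p T) < δ)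
    (hsol : ∀ t : ℝ, 0 ≤ t → HasDerivAt sol (X (sol t)) t) {t : ℝ} (ht : 0 ≤ t) :
    Metric.infDist (sol t) (AffineSubspace.mk' p T) ≤
      Real.exp (-m * t) * Metric.infDist (sol 0) (AffineSubspace.mk' p T) := by
  simp only [infDist_mk'] at hsol₀ ⊢
  set Q := Tᗮ.starProjection
  have hderiv : ∀ s, 0 ≤ s → HasDerivAt (fun s => ‖Q (sol s - p)‖ ^ 2)
      (2 * ⟪Q (sol s - p), Q (X (sol s))⟫_ℝ) s := fun s hs =>
    (Q.hasFDerivAt.comp_hasDerivAt s ((hsol s hs).sub_const p)).norm_sq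
  have hdecay : ∀ s, 0 ≤ s → ‖Q (sol s - p)‖ ^ 2 < δ ^ 2 →
      2 * ⟪Q (sol s - p), Q (X (sol s))⟫_ℝ ≤ -(2 * m) * ‖Q (sol s - p)‖ ^ 2 := by
    intro s _ hs
    have hself_adjoint : ⟪Q (sol s - p), Q (X (sol s))⟫_ℝ = ⟪X (sol s), Q (sol s - p)⟫_ℝ := by
      rw [real_inner_comm, Submodule.inner_starProjection_left_eq_right,
        Submodule.starProjection_eq_self_iff.2 (Submodule.starProjection_apply_mem _ _)]
    rw [hself_adjoint]
    linarith [hX (sol s) (lt_of_pow_lt_pow_left₀ 2 hδ.le hs)]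
  have hsq : ‖Q (sol t - p)‖ ^ 2 ≤ ‖Q (sol 0 - p)‖ ^ 2 * Real.exp (-(2 * m) * t) :=
    le_mul_exp_of_deriv_le_neg_mul (φ := fun s => ‖Q (sol s - p)‖ ^ 2) (by positivity)
      (by positivity) (by gcongr)
      (fun s hs => (hderiv s hs).continuousAt.continuousWithinAt)
      (fun s hs => (hderiv s hs).hasDerivWithinAt) hdecay ht
  refine le_of_sq_le_sq (hsq.trans_eq ?_) (by positivity)
  rw [mul_pow, ← Real.exp_nat_mul, mul_comm]
  congr 2
  push_cast
  ring

theorem isLocallyExponentiallyStable_mk'_of_inner_le (hδ : 0 < δ) (hm : 0 < m)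
    (hX : ∀ x, ‖Tᗮ.starProjection (x - p)‖ < δ →
      ⟪X x, Tᗮ.starProjection (x - p)⟫_ℝ ≤ -m * ‖Tᗮ.starProjection (x - p)‖ ^ 2) :
    IsLocallyExponentiallyStable X (AffineSubspace.mk' p T) := by
  refine ⟨{x | Metric.infDist x (AffineSubspace.mk' p T) < δ},
    isOpen_lt (Metric.continuous_infDist_pt _) continuous_const,
    fun y hy => (Metric.infDist_zero_of_mem hy).trans_lt hδ, 1, one_pos, m, hm,
    fun sol hsol₀ hsol => ?_⟩
  have hdecay := fun t ht => infDist_mk'_le_mul_exp hδ hm hX hsol₀ hsol (t := t) ht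
  have hexp : Tendsto (fun t : ℝ => Real.exp (-m * t)) atTop (𝓝 0) :=
    Real.tendsto_exp_atBot.comp (tendsto_id.const_mul_atTop_of_neg (neg_neg_of_pos hm))
  refine ⟨by simpa only [one_mul] using hdecay,
    squeeze_zero' (Eventually.of_forall fun t => Metric.infDist_nonneg)
      ((eventually_ge_atTop 0).mono hdecay) ?_⟩
  simpa only [zero_mul] using hexp.mul_const (Metric.infDist (sol 0) _)

end AffineSubspace

section LeastSquares

variable {F : Type*} [NormedAddCommGroup F] [InnerProductSpace ℝ F]
  {H : Type*} [NormedAddCommGroup H] [InnerProductSpace ℝ H]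

lemma norm_sq_le_four_mul_inner {a b w : H} (ha : ‖a - w‖ ≤ ‖w‖ / 4) (hb : ‖b - w‖ ≤ ‖w‖ / 4) :
    ‖w‖ ^ 2 ≤ 4 * ⟪a, b⟫_ℝ := by
  have hexpand : ⟪a, b⟫_ℝ = ‖w‖ ^ 2 + ⟪a - w, w⟫_ℝ + ⟪w, b - w⟫_ℝ + ⟪a - w, b - w⟫_ℝ := by
    simp only [inner_sub_left, inner_sub_right, real_inner_self_eq_norm_sq]
    ring
  have h₁ := neg_le_of_abs_le (abs_real_inner_le_norm (a - w) w)
  have h₂ := neg_le_of_abs_le (abs_real_inner_le_norm w (b - w))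
  have h₃ := neg_le_of_abs_le (abs_real_inner_le_norm (a - w) (b - w))
  have := mul_le_mul ha hb (norm_nonneg _) (by positivity)
  nlinarith [mul_le_mul_of_nonneg_right ha (norm_nonneg w),
    mul_le_mul_of_nonneg_left hb (norm_nonneg w)]

lemma inner_gradient_half_norm_sq [CompleteSpace F] {r : F → H} {x : F}
    (hr : DifferentiableAt ℝ r x) (q : F) :
    ⟪gradient (fun y => (1 / 2) * ‖r y‖ ^ 2) x, q⟫_ℝ = ⟪r x, fderiv ℝ r x q⟫_ℝ := by
  rw [inner_gradient_left, (hr.hasFDerivAt.norm_sq.const_mul (1 / 2)).fderiv]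
  simp

lemma gradient_add_of_forall_add_eq [CompleteSpace F] {V : F → ℝ} {τ : F}
    (hV : ∀ x, V (x + τ) = V x) (x : F) :
    gradient V (x + τ) = gradient V x := by
  rw [gradient, gradient, ← fderiv_comp_add_right, funext hV]

variable [FiniteDimensional ℝ F]

lemma exists_mul_norm_le_norm_apply_of_ker_le {T : Submodule ℝ F} {D : F →ₗ[ℝ] H}
    (hker : D.ker ≤ T) : ∃ c > 0, ∀ q ∈ Tᗮ, c * ‖q‖ ≤ ‖D q‖ := by
  have hinj : (D ∘ₗ Tᗮ.subtype).ker = ⊥ := by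
    refine LinearMap.ker_eq_bot'.2 fun q hq => Subtype.ext ?_
    exact (Submodule.mem_bot ℝ).1 (T.inf_orthogonal_eq_bot.le ⟨hker hq, q.2⟩)
  obtain ⟨K, hK, hDK⟩ := LinearMap.exists_antilipschitzWith _ hinj
  refine ⟨(K : ℝ)⁻¹, inv_pos.2 hK, fun q hq => ?_⟩
  rw [inv_mul_le_iff₀ (NNReal.coe_pos.2 hK)]
  exact ZeroHomClass.bound_of_antilipschitz _ hDK (⟨q, hq⟩ : Tᗮ)

variable {T : Submodule ℝ F} {p : F} {r : F → H}

lemma exists_eventually_mul_norm_sq_le_inner_gradient (hr : ContDiffAt ℝ 1 r p) (hrp : r p = 0)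
    (hker : (fderiv ℝ r p).ker ≤ T) :
    ∃ m > 0, ∀ᶠ x in 𝓝 p, x - p ∈ Tᗮ →
      m * ‖x - p‖ ^ 2 ≤ ⟪gradient (fun y => (1 / 2) * ‖r y‖ ^ 2) x, x - p⟫_ℝ := by
  obtain ⟨c, hc, hcoercive⟩ := exists_mul_norm_le_norm_apply_of_ker_le hker
  have hlinear : ∀ᶠ x in 𝓝 p, ‖r x - fderiv ℝ r p (x - p)‖ ≤ c / 4 * ‖x - p‖ := by
    simpa only [hrp, sub_zero] using
      (hr.differentiableAt one_ne_zero).hasFDerivAt.isLittleO.def (by positivity : 0 < c / 4)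
  have hfderiv : ∀ᶠ x in 𝓝 p, ‖fderiv ℝ r x - fderiv ℝ r p‖ < c / 4 := by
    simpa only [dist_eq_norm] using
      Metric.tendsto_nhds.1 (hr.continuousAt_fderiv one_ne_zero) (c / 4) (by positivity)
  have hdiff : ∀ᶠ x in 𝓝 p, DifferentiableAt ℝ r x :=
    (hr.eventually (by simp)).mono fun x hx => hx.differentiableAt one_ne_zero
  refine ⟨c ^ 2 / 4, by positivity, ?_⟩
  filter_upwards [hlinear, hfderiv, hdiff] with x hlin hfd hd hxT
  set q := x - p
  have hcq : c * ‖q‖ ≤ ‖fderiv ℝ r p q‖ := hcoercive q hxT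
  have hvalue : ‖r x - fderiv ℝ r p q‖ ≤ ‖fderiv ℝ r p q‖ / 4 := by linarith
  have hderiv : ‖fderiv ℝ r x q - fderiv ℝ r p q‖ ≤ ‖fderiv ℝ r p q‖ / 4 :=
    calc ‖fderiv ℝ r x q - fderiv ℝ r p q‖ = ‖(fderiv ℝ r x - fderiv ℝ r p) q‖ := by simp
      _ ≤ c / 4 * ‖q‖ := ContinuousLinearMap.le_of_opNorm_le _ hfd.le q
      _ ≤ ‖fderiv ℝ r p q‖ / 4 := by linarith
  rw [inner_gradient_half_norm_sq hd]
  have hsq : (c * ‖q‖) ^ 2 ≤ ‖fderiv ℝ r p q‖ ^ 2 := by gcongr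
  linarith [norm_sq_le_four_mul_inner hvalue hderiv, mul_pow c ‖q‖ 2]

theorem isLocallyExponentiallyStable_neg_gradient_half_norm_sq (hr : ContDiffAt ℝ 1 r p)
    (hrp : r p = 0) (hker : (fderiv ℝ r p).ker ≤ T) (hinv : ∀ x, ∀ τ ∈ T, r (x + τ) = r x) :
    IsLocallyExponentiallyStable (fun x => -gradient (fun y => (1 / 2) * ‖r y‖ ^ 2) x)
      (AffineSubspace.mk' p T) := by
  obtain ⟨m, hm, hnear⟩ := exists_eventually_mul_norm_sq_le_inner_gradient hr hrp hker
  obtain ⟨δ, hδ, hball⟩ := Metric.eventually_nhds_iff.1 hnear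
  refine isLocallyExponentiallyStable_mk'_of_inner_le hδ hm fun x hx => ?_
  set q := Tᗮ.starProjection (x - p) with hq
  have hx_eq : x = p + q + T.starProjection (x - p) := by
    rw [hq, Submodule.starProjection_orthogonal_val]
    abel
  have hgrad : gradient (fun y => (1 / 2) * ‖r y‖ ^ 2) x =
      gradient (fun y => (1 / 2) * ‖r y‖ ^ 2) (p + q) := by
    conv_lhs => rw [hx_eq]
    exact gradient_add_of_forall_add_eq
      (fun y => by rw [hinv y _ (Submodule.starProjection_apply_mem _ _)]) _
  have hinner := hball (y := p + q) (by simpa using hx)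
    (by simpa using Submodule.starProjection_apply_mem _ _)
  rw [add_sub_cancel_left] at hinner
  rw [inner_neg_left, hgrad]
  linarith

end LeastSquares

section Complex

lemma hasDerivAt_re_div_norm {q : ℝ → ℂ} {q' : ℂ} {s : ℝ} (hq : HasDerivAt q q' s)
    (hqs : q s ≠ 0) :
    HasDerivAt (fun t => (q t).re / ‖q t‖) (-((q s).im / ‖q s‖ * (q' / q s).im)) s := by
  have hre : HasDerivAt (fun t => (q t).re) q'.re s :=
    Complex.reCLM.hasFDerivAt.comp_hasDerivAt s hq
  have hnorm_pos : 0 < ‖q s‖ := norm_pos_iff.2 hqs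
  have hnorm : HasDerivAt (fun t => ‖q t‖) (⟪q s, q'⟫_ℝ / ‖q s‖) s := by
    have hsqrt := hq.norm_sq.sqrt (by positivity)
    simp only [Real.sqrt_sq (norm_nonneg _), mul_div_mul_left _ _ (two_ne_zero' ℝ)] at hsqrt
    exact hsqrt
  refine (hre.div hnorm hnorm_pos.ne').congr_deriv ?_
  have hsq : ‖q s‖ ^ 2 = (q s).re ^ 2 + (q s).im ^ 2 := by
    rw [Complex.sq_norm, Complex.normSq_apply]
    ring
  rw [Complex.div_im, Complex.normSq_eq_norm_sq, Complex.inner]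
  simp only [Complex.mul_re, Complex.conj_re, Complex.conj_im]
  field_simp
  rw [hsq]
  ring

lemma eq_zero_of_im_div_eq_zero {r w₁ w₂ : ℂ} (h₁ : (r / w₁).im = 0) (h₂ : (r / w₂).im = 0)
    (h : (w₁ / (w₁ - w₂)).im ≠ 0) : r = 0 := by
  by_contra hr
  obtain ⟨t₁, ht₁⟩ : ∃ t : ℝ, (t : ℂ) = r / w₁ := CanLift.prf _ h₁
  obtain ⟨t₂, ht₂⟩ : ∃ t : ℝ, (t : ℂ) = r / w₂ := CanLift.prf _ h₂
  have hreal : w₁ / (w₁ - w₂) = ((t₁⁻¹ / (t₁⁻¹ - t₂⁻¹) : ℝ) : ℂ) := by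
    push_cast
    rw [ht₁, ht₂, inv_div, inv_div, ← sub_div, div_div_div_cancel_right₀ hr]
  exact h (by rw [hreal, Complex.ofReal_im])

end Complex

section Rigidity

/-- Membership in the index set `T_G^F` of the formation cost, for the graph with edge set `E`:
`t = (i, j, k)` stands for the angle at `i` of the triangle `i j k`. -/
def IsAngleTriple (E : Finset (ℕ × ℕ)) (t : ℕ × ℕ × ℕ) : Prop :=
  (t.1, t.2.1) ∈ E ∧ (t.2.1, t.2.2) ∈ E ∧ (t.1, t.2.2) ∈ E ∧ t.1 < t.2.2 ∧ t.2.1 < t.2.2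

lemma IsAngleTriple.mono {E E' : Finset (ℕ × ℕ)} (hsub : E ⊆ E') {t : ℕ × ℕ × ℕ}
    (h : IsAngleTriple E t) : IsAngleTriple E' t :=
  ⟨hsub h.1, hsub h.2.1, hsub h.2.2.1, h.2.2.2⟩

namespace IsTLGraph

variable {m : ℕ} {E : Finset (ℕ × ℕ)}

lemma lt (h : IsTLGraph m E) {i j : ℕ} (hij : (i, j) ∈ E) : i < m ∧ j < m := by
  induction h generalizing i j with
  | base =>
    simp only [Finset.mem_insert, Finset.mem_singleton, Prod.mk.injEq] at hij
    omega
  | step _ hab ih =>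
    have := ih hab
    simp only [Finset.mem_union, Finset.mem_insert, Finset.mem_singleton, Prod.mk.injEq] at hij
    rcases hij with hij | hij
    · have := ih hij
      omega
    · omega

lemma symm (h : IsTLGraph m E) {i j : ℕ} (hij : (i, j) ∈ E) : (j, i) ∈ E := by
  induction h generalizing i j with
  | base =>
    simp only [Finset.mem_insert, Finset.mem_singleton, Prod.mk.injEq] at hij ⊢
    omega
  | step _ _ ih =>
    simp only [Finset.mem_union, Finset.mem_insert, Finset.mem_singleton, Prod.mk.injEq] at hij ⊢
    rcases hij with hij | hij
    · exact Or.inl (ih hij)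
    · omega

-- Relative to the similarity `a z + b` obtained for the smaller graph, the velocity of the new
-- vertex has a defect which is a real multiple of both new edges, hence zero.
theorem exists_eq_mul_add (h : IsTLGraph m E) {z u : ℕ → ℂ}
    (hne : ∀ i j, (i, j) ∈ E → z i ≠ z j)
    (hnondeg : ∀ i j k, IsAngleTriple E (i, j, k) → ((z k - z i) / (z j - z i)).im ≠ 0)
    (hrate : ∀ i j k, IsAngleTriple E (i, j, k) →
      ((u k - u i) / (z k - z i)).im = ((u j - u i) / (z j - z i)).im) :
    ∃ a b : ℂ, ∀ i < m, u i = a * z i + b := by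
  induction h with
  | base =>
    have h₁₀ : z 1 - z 0 ≠ 0 := sub_ne_zero.2 (hne 1 0 (by simp))
    refine ⟨(u 1 - u 0) / (z 1 - z 0), u 0 - (u 1 - u 0) / (z 1 - z 0) * z 0, fun i hi => ?_⟩
    interval_cases i
    · ring
    · field_simp
      ring
  | @step n E i j hE hij ih =>
    have hsub : E ⊆ E ∪ {(n, i), (i, n), (n, j), (j, n)} := Finset.subset_union_left
    obtain ⟨a, b, hab⟩ := ih (fun x y hxy => hne x y (hsub hxy))
      (fun x y k ht => hnondeg x y k (ht.mono hsub)) (fun x y k ht => hrate x y k (ht.mono hsub))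
    obtain ⟨hi, hj⟩ := hE.lt hij
    have htriple : IsAngleTriple (E ∪ {(n, i), (i, n), (n, j), (j, n)}) (i, j, n) :=
      ⟨hsub hij, by simp, by simp, hi, hj⟩
    have htriple' : IsAngleTriple (E ∪ {(n, i), (i, n), (n, j), (j, n)}) (j, i, n) :=
      ⟨hsub (hE.symm hij), by simp, by simp, hj, hi⟩
    have hdefect : ∀ x y, IsAngleTriple (E ∪ {(n, i), (i, n), (n, j), (j, n)}) (x, y, n) →
        ((u n - (a * z n + b)) / (z n - z x)).im = 0 := by
      intro x y ht
      have hyx : z y - z x ≠ 0 := sub_ne_zero.2 (hne x y ht.1).symm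
      have hnx : z n - z x ≠ 0 := sub_ne_zero.2 (hne x n ht.2.2.1).symm
      have hu : (u n - (a * z n + b)) / (z n - z x) =
          (u n - u x) / (z n - z x) - (u y - u x) / (z y - z x) := by
        rw [hab x ht.2.2.2.1, hab y ht.2.2.2.2]
        field_simp
        ring
      rw [hu, Complex.sub_im, hrate x y n ht, sub_self]
    have hzero : u n - (a * z n + b) = 0 :=
      eq_zero_of_im_div_eq_zero (hdefect i j htriple) (hdefect j i htriple')
        (by rw [sub_sub_sub_cancel_left]; exact hnondeg i j n htriple)
    refine ⟨a, b, fun k hk => ?_⟩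
    rcases Nat.lt_succ_iff_lt_or_eq.1 hk with hk | rfl
    · exact hab k hk
    · exact sub_eq_zero.1 hzero

end IsTLGraph

end Rigidity

section Configurations

variable {n : ℕ}

/-- The position of agent `i`, as a complex number: planar similarities become affine maps
`z ↦ a z + b` of `ℂ`. Like `pt`, it has the junk value `0` for `i ≥ n`. -/
def position (i : ℕ) : Conf n →L[ℝ] ℂ :=
  LinearMap.toContinuousLinearMap
    { toFun := fun P => ⟨pt P i 0, pt P i 1⟩
      map_add' := fun P Q => by
        apply Complex.ext <;> by_cases h : i < n <;> simp [pt, h]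
      map_smul' := fun c P => by
        apply Complex.ext <;> by_cases h : i < n <;> simp [pt, h] }

lemma position_apply (i : ℕ) (P : Conf n) : position i P = ⟨pt P i 0, pt P i 1⟩ := rfl

/-- The relative position of agent `j` as seen from agent `i`. -/
def edgeVector (i j : ℕ) : Conf n →L[ℝ] ℂ := position j - position i

lemma edgeVector_apply (i j : ℕ) (P : Conf n) :
    edgeVector i j P = position j P - position i P := rfl

lemma edgeVector_ne_zero {P : Conf n} {i j : ℕ} (h : pt P i ≠ pt P j) : edgeVector i j P ≠ 0 := by
  intro h₀
  obtain ⟨hre, him⟩ := Complex.ext_iff.1 (sub_eq_zero.1 h₀)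
  exact h (funext (Fin.forall_fin_two.2 ⟨hre.symm, him.symm⟩))

/-- The complex ratio of the edges `i k` and `i j`; its argument is the oriented angle at `i`. -/
def edgeRatio (i j k : ℕ) (P : Conf n) : ℂ := edgeVector i k P / edgeVector i j P

lemma angCosP_eq_re_div_norm (P : Conf n) (i j k : ℕ) :
    angCosP P (i, j, k) = (edgeRatio i j k P).re / ‖edgeRatio i j k P‖ := by
  have hnrm : ∀ l, nrm (pt P i - pt P l) = ‖edgeVector i l P‖ := fun l => by
    rw [Complex.norm_def, Complex.normSq_apply, nrm]
    congr 1
    simp only [dotProduct, Fin.sum_univ_two, Pi.sub_apply, edgeVector_apply, position_apply,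
      Complex.sub_re, Complex.sub_im]
    ring
  have hdot : (pt P i - pt P j) ⬝ᵥ (pt P i - pt P k) = ⟪edgeVector i j P, edgeVector i k P⟫_ℝ := by
    simp only [dotProduct, Fin.sum_univ_two, Pi.sub_apply, edgeVector_apply, position_apply,
      Complex.inner, Complex.mul_re, Complex.conj_re, Complex.conj_im, Complex.sub_re,
      Complex.sub_im]
    ring
  have hre : (edgeRatio i j k P).re =
      ⟪edgeVector i j P, edgeVector i k P⟫_ℝ / ‖edgeVector i j P‖ ^ 2 := by
    rw [edgeRatio, Complex.div_re, Complex.normSq_eq_norm_sq, Complex.inner, Complex.mul_re,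
      Complex.conj_re, Complex.conj_im]
    ring
  rw [angCosP, brg, brg, smul_dotProduct, dotProduct_smul, hnrm, hnrm, hdot, hre, edgeRatio,
    norm_div]
  simp only [smul_eq_mul]
  by_cases hij : ‖edgeVector i j P‖ = 0
  · simp [hij]
  · field_simp

lemma angCosP_eq_of_edgeRatio_eq {P Q : Conf n} {i j k : ℕ}
    (h : edgeRatio i j k P = edgeRatio i j k Q) : angCosP P (i, j, k) = angCosP Q (i, j, k) := by
  rw [angCosP_eq_re_div_norm, angCosP_eq_re_div_norm, h]

lemma collinear_of_im_edgeRatio_eq_zero {P : Conf n} {i j k : ℕ}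
    (h : (edgeRatio i j k P).im = 0) : Collinear ℝ {pt P i, pt P j, pt P k} := by
  by_cases hij : pt P i = pt P j
  · simpa [hij] using collinear_pair ℝ (pt P j) (pt P k)
  obtain ⟨t, ht⟩ : ∃ t : ℝ, (t : ℂ) = edgeRatio i j k P := CanLift.prf _ h
  have hik : edgeVector i k P = t * edgeVector i j P :=
    (div_eq_iff (edgeVector_ne_zero hij)).1 ht.symm
  have hk : pt P k = t • (pt P j - pt P i) +ᵥ pt P i := by
    obtain ⟨hre, him⟩ := Complex.ext_iff.1 hik
    rw [Complex.re_ofReal_mul] at hre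
    rw [Complex.im_ofReal_mul] at him
    exact funext (Fin.forall_fin_two.2 ⟨sub_eq_iff_eq_add.1 hre, sub_eq_iff_eq_add.1 him⟩)
  refine (collinear_iff_of_mem (p₀ := pt P i) (by simp)).2 ⟨pt P j - pt P i, ?_⟩
  rintro _ (rfl | rfl | rfl)
  · exact ⟨0, by simp⟩
  · exact ⟨1, by simp⟩
  · exact ⟨t, hk⟩

lemma contDiffAt_angCosP {P : Conf n} {i j k : ℕ} (hij : edgeVector i j P ≠ 0)
    (hik : edgeVector i k P ≠ 0) {r : WithTop ℕ∞} :
    ContDiffAt ℝ r (fun P : Conf n => angCosP P (i, j, k)) P := by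
  have hratio : ContDiffAt ℝ r (edgeRatio i j k) P := by
    unfold edgeRatio
    simp only [div_eq_mul_inv]
    exact (edgeVector i k).contDiff.contDiffAt.mul ((edgeVector i j).contDiff.contDiffAt.inv hij)
  simp only [angCosP_eq_re_div_norm]
  exact (Complex.reCLM.contDiff.contDiffAt.comp P hratio).div
    (hratio.norm ℝ (div_ne_zero hik hij)) (norm_ne_zero_iff.2 (div_ne_zero hik hij))

lemma hasLineDerivAt_angCosP {P : Conf n} {i j k : ℕ} (hij : edgeVector i j P ≠ 0)
    (hik : edgeVector i k P ≠ 0) (u : Conf n) :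
    HasLineDerivAt ℝ (angCosP · (i, j, k))
      (-((edgeRatio i j k P).im / ‖edgeRatio i j k P‖ *
        ((edgeVector i k u / edgeVector i k P).im - (edgeVector i j u / edgeVector i j P).im)))
      P u := by
  have hline : ∀ l, HasDerivAt (fun s : ℝ => edgeVector i l (P + s • u)) (edgeVector i l u) 0 :=
    fun l => (edgeVector i l).hasFDerivAt.hasLineDerivAt u
  have hratio := (hline k).div (hline j) (by simpa using hij)
  have hcos := hasDerivAt_re_div_norm hratio (by simpa using div_ne_zero hik hij)
  simp only [HasLineDerivAt, angCosP_eq_re_div_norm]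
  refine hcos.congr_deriv ?_
  simp only [Pi.div_apply, zero_smul, add_zero, edgeRatio, ← Complex.sub_im]
  congr 4
  field_simp

/-- The configurations `1_n ⊗ ξ`, i.e. the displacements translating all agents simultaneously. -/
def translations (n : ℕ) : Submodule ℝ (Conf n) where
  carrier := {τ | ∃ ξ : Vec2, ∀ (i : Fin n) (d : Fin 2), τ (i, d) = ξ d}
  zero_mem' := ⟨0, fun _ _ => rfl⟩
  add_mem' := by
    rintro _ _ ⟨ξ, hξ⟩ ⟨η, hη⟩
    exact ⟨ξ + η, fun i d => congrArg₂ (· + ·) (hξ i d) (hη i d)⟩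
  smul_mem' := by
    rintro c _ ⟨ξ, hξ⟩
    exact ⟨c • ξ, fun i d => congrArg (c * ·) (hξ i d)⟩

lemma coe_mk'_translations (P : Conf n) :
    (AffineSubspace.mk' P (translations n) : Set (Conf n)) =
      {Q | ∃ ξ : Vec2, ∀ (i : Fin n) (d : Fin 2), Q (i, d) = P (i, d) + ξ d} := by
  ext Q
  exact exists_congr fun ξ => forall₂_congr fun i d => sub_eq_iff_eq_add'

lemma edgeVector_add_of_mem_translations {τ : Conf n} (hτ : τ ∈ translations n) {i j : ℕ}
    (hi : i < n) (hj : j < n) (P : Conf n) : edgeVector i j (P + τ) = edgeVector i j P := by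
  obtain ⟨ξ, hξ⟩ := hτ
  have hτ₀ : edgeVector i j τ = 0 := by
    simp [edgeVector_apply, position_apply, pt, hi, hj, hξ]
  rw [map_add, hτ₀, add_zero]

lemma mem_translations_of_position_eq {u : Conf n} {b : ℂ} (h : ∀ i < n, position i u = b) :
    u ∈ translations n := by
  refine ⟨![b.re, b.im], fun i d => ?_⟩
  obtain ⟨hre, him⟩ := Complex.ext_iff.1 (h i i.2)
  simp only [position_apply, pt, i.2, dif_pos] at hre him
  fin_cases d
  · exact hre
  · exact him

lemma im_edgeVector_div_eq_of_hasLineDerivAt_angCosP {P u : Conf n} {i j k : ℕ}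
    (h : HasLineDerivAt ℝ (angCosP · (i, j, k)) 0 P u)
    (him : (edgeRatio i j k P).im ≠ 0) :
    (edgeVector i k u / edgeVector i k P).im = (edgeVector i j u / edgeVector i j P).im := by
  have hratio : edgeRatio i j k P ≠ 0 := fun h₀ => him (by rw [h₀, Complex.zero_im])
  obtain ⟨hik, hij⟩ := div_ne_zero_iff.1 hratio
  have hzero := (hasLineDerivAt_angCosP hij hik u).unique h
  rw [neg_eq_zero, mul_eq_zero_iff_left (div_ne_zero him (norm_ne_zero_iff.2 hratio))] at hzero
  exact sub_eq_zero.1 hzero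

theorem IsTLGraph.mem_translations_of_hasLineDerivAt_angCosP {E : Finset (ℕ × ℕ)}
    (hE : IsTLGraph n E) {P u : Conf n} (hne : ∀ i j, (i, j) ∈ E → edgeVector i j P ≠ 0)
    (hnondeg : ∀ i j k, IsAngleTriple E (i, j, k) → (edgeRatio i j k P).im ≠ 0)
    (hangle : ∀ t, IsAngleTriple E t → HasLineDerivAt ℝ (angCosP · t) 0 P u)
    {l₁ l₂ : ℕ} (hl₁ : l₁ < n) (hl₂ : l₂ < n) (hP : edgeVector l₁ l₂ P ≠ 0)
    (hu : edgeVector l₁ l₂ u = 0) : u ∈ translations n := by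
  obtain ⟨a, b, hab⟩ := hE.exists_eq_mul_add (z := fun i => position i P)
    (u := fun i => position i u) (fun i j hij => (sub_ne_zero.1 (hne i j hij)).symm) hnondeg
    (fun i j k ht =>
      im_edgeVector_div_eq_of_hasLineDerivAt_angCosP (hangle _ ht) (hnondeg i j k ht))
  have ha : a = 0 := by
    have hleaders : a * edgeVector l₁ l₂ P = edgeVector l₁ l₂ u := by
      rw [edgeVector_apply, edgeVector_apply, hab l₁ hl₁, hab l₂ hl₂]
      ring
    exact (mul_eq_zero_iff_right hP).1 (hleaders.trans hu)
  exact mem_translations_of_position_eq (b := b) fun i hi => by simpa [ha] using hab i hi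

end Configurations

section Similarity

variable {n : ℕ}

lemma position_eq_mul_of_rotation {P Q : Conf n} {θ c : ℝ}
    (hQ : ∀ (i : Fin n) (d : Fin 2), Q (i, d) = c * (Ro θ).mulVec (fun d' => P (i, d')) d)
    {i : ℕ} (hi : i < n) : position i Q = c * Complex.exp (θ * Complex.I) * position i P := by
  apply Complex.ext <;>
    simp only [position_apply, pt, hi, dif_pos, hQ, Ro, mulVec, dotProduct, Fin.sum_univ_two,
      of_apply, cons_val_zero, cons_val_one, cons_val_fin_one, cons_val', Complex.mul_re,
      Complex.mul_im, Complex.ofReal_re, Complex.ofReal_im, Complex.exp_ofReal_mul_I_re,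
      Complex.exp_ofReal_mul_I_im] <;> ring

variable {P Q : Conf n} {w : ℂ}

lemma edgeVector_eq_mul (hQ : ∀ i < n, position i Q = w * position i P) {i j : ℕ} (hi : i < n)
    (hj : j < n) : edgeVector i j Q = w * edgeVector i j P := by
  rw [edgeVector_apply, edgeVector_apply, hQ i hi, hQ j hj, mul_sub]

lemma edgeRatio_eq_of_similar (hw : w ≠ 0) (hQ : ∀ i < n, position i Q = w * position i P)
    {i j k : ℕ} (hi : i < n) (hj : j < n) (hk : k < n) : edgeRatio i j k Q = edgeRatio i j k P := by
  rw [edgeRatio, edgeRatio, edgeVector_eq_mul hQ hi hj, edgeVector_eq_mul hQ hi hk,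
    mul_div_mul_left _ _ hw]

end Similarity

section Residual

variable {n : ℕ} {TF : Finset (ℕ × ℕ × ℕ)} {l₁ l₂ : ℕ} {Pstar Ptilde P : Conf n}

/-- The residual vector of the least-squares cost `V_F + V_M`: the errors of the prescribed angle
cosines, together with the error of the leader edge. -/
def maneuverResidual (TF : Finset (ℕ × ℕ × ℕ)) (l₁ l₂ : ℕ) (Pstar Ptilde P : Conf n) :
    WithLp 2 (EuclideanSpace ℝ TF × ℂ) :=
  WithLp.toLp 2 (WithLp.toLp 2 fun t : TF => angCosP P t - angCosP Pstar t,
    edgeVector l₁ l₂ P - edgeVector l₁ l₂ Ptilde)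

lemma VM_eq_half_norm_sq :
    VM l₁ l₂ Ptilde P = (1 / 2) * ‖edgeVector l₁ l₂ P - edgeVector l₁ l₂ Ptilde‖ ^ 2 := by
  rw [VM, Complex.sq_norm, Complex.normSq_apply]
  simp only [dotProduct, Fin.sum_univ_two, Pi.sub_apply, edgeVector_apply, position_apply,
    Complex.sub_re, Complex.sub_im]
  ring

lemma VF_add_VM_eq_half_norm_sq :
    VF TF Pstar P + VM l₁ l₂ Ptilde P =
      (1 / 2) * ‖maneuverResidual TF l₁ l₂ Pstar Ptilde P‖ ^ 2 := by
  rw [WithLp.prod_norm_sq_eq_of_L2, EuclideanSpace.real_norm_sq_eq, mul_add, VM_eq_half_norm_sq,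
    VF, ← TF.sum_coe_sort]
  rfl

lemma contDiffAt_maneuverResidual
    (hne : ∀ i j k, (i, j, k) ∈ TF → edgeVector i j P ≠ 0 ∧ edgeVector i k P ≠ 0)
    {r : WithTop ℕ∞} : ContDiffAt ℝ r (maneuverResidual TF l₁ l₂ Pstar Ptilde) P := by
  have hangles : ContDiffAt ℝ r (fun P : Conf n =>
      (WithLp.toLp 2 fun t : TF => angCosP P t - angCosP Pstar t : EuclideanSpace ℝ TF)) P :=
    contDiffAt_euclidean.2 fun ⟨⟨i, j, k⟩, ht⟩ =>
      (contDiffAt_angCosP (hne i j k ht).1 (hne i j k ht).2).sub contDiffAt_const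
  exact (WithLp.prodContinuousLinearEquiv 2 ℝ _ _).symm.contDiff.contDiffAt.comp P
    (hangles.prodMk ((edgeVector l₁ l₂).contDiff.contDiffAt.sub contDiffAt_const))

lemma maneuverResidual_add_of_mem_translations
    (hlt : ∀ i j k, (i, j, k) ∈ TF → i < n ∧ j < n ∧ k < n) (hl₁ : l₁ < n) (hl₂ : l₂ < n)
    {τ : Conf n} (hτ : τ ∈ translations n) (P : Conf n) :
    maneuverResidual TF l₁ l₂ Pstar Ptilde (P + τ) = maneuverResidual TF l₁ l₂ Pstar Ptilde P := by
  have hangle : ∀ t : TF, angCosP (P + τ) t = angCosP P t := fun ⟨⟨i, j, k⟩, ht⟩ => by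
    obtain ⟨hi, hj, hk⟩ := hlt i j k ht
    refine angCosP_eq_of_edgeRatio_eq ?_
    rw [edgeRatio, edgeRatio, edgeVector_add_of_mem_translations hτ hi hj,
      edgeVector_add_of_mem_translations hτ hi hk]
  simp only [maneuverResidual, hangle, edgeVector_add_of_mem_translations hτ hl₁ hl₂]

lemma maneuverResidual_self (hcos : ∀ t ∈ TF, angCosP Ptilde t = angCosP Pstar t) :
    maneuverResidual TF l₁ l₂ Pstar Ptilde Ptilde = 0 := by
  have hangle : ∀ t : TF, angCosP Ptilde t - angCosP Pstar t = 0 := fun t =>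
    sub_eq_zero.2 (hcos t t.2)
  simp only [maneuverResidual, hangle, sub_self]
  rfl

lemma hasLineDerivAt_of_mem_ker_fderiv_maneuverResidual
    (hr : DifferentiableAt ℝ (maneuverResidual TF l₁ l₂ Pstar Ptilde) P) {u : Conf n}
    (hu : u ∈ (fderiv ℝ (maneuverResidual TF l₁ l₂ Pstar Ptilde) P).ker) :
    (∀ t ∈ TF, HasLineDerivAt ℝ (angCosP · t) 0 P u) ∧ edgeVector l₁ l₂ u = 0 := by
  set r := maneuverResidual TF l₁ l₂ Pstar Ptilde
  have hrate : ∀ {G : Type} [NormedAddCommGroup G] [NormedSpace ℝ G]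
      (proj : WithLp 2 (EuclideanSpace ℝ TF × ℂ) →L[ℝ] G), HasLineDerivAt ℝ (proj ∘ r) 0 P u :=
    fun proj => by
      have hu₀ : fderiv ℝ r P u = 0 := hu
      simpa [hu₀] using (proj.hasFDerivAt.comp P hr.hasFDerivAt).hasLineDerivAt u
  refine ⟨fun t ht => ?_, ?_⟩
  · have herror : HasLineDerivAt ℝ (fun Q => angCosP Q t - angCosP Pstar t) 0 P u :=
      hrate (EuclideanSpace.proj (⟨t, ht⟩ : TF) ∘L WithLp.fstL 2 ℝ _ _)
    exact (hasDerivAt_sub_const_iff _).1 herror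
  · have hleader : HasLineDerivAt ℝ (WithLp.sndL 2 ℝ _ _ ∘ r) (edgeVector l₁ l₂ u) P u :=
      ((edgeVector l₁ l₂).hasFDerivAt.sub_const _).hasLineDerivAt u
    exact hleader.unique (hrate _)

theorem ker_fderiv_maneuverResidual_le_translations {E : Finset (ℕ × ℕ)} (hE : IsTLGraph n E)
    (hTF : ∀ t, IsAngleTriple E t → t ∈ TF)
    (hr : DifferentiableAt ℝ (maneuverResidual TF l₁ l₂ Pstar Ptilde) P)
    (hne : ∀ i j, (i, j) ∈ E → edgeVector i j P ≠ 0)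
    (hnondeg : ∀ i j k, IsAngleTriple E (i, j, k) → (edgeRatio i j k P).im ≠ 0)
    (hl₁ : l₁ < n) (hl₂ : l₂ < n) (hP : edgeVector l₁ l₂ P ≠ 0) :
    (fderiv ℝ (maneuverResidual TF l₁ l₂ Pstar Ptilde) P).ker ≤ translations n := by
  intro u hu
  obtain ⟨hangle, hleaders⟩ := hasLineDerivAt_of_mem_ker_fderiv_maneuverResidual hr hu
  exact hE.mem_translations_of_hasLineDerivAt_angCosP hne hnondeg (fun t ht => hangle t (hTF t ht))
    hl₁ hl₂ hP hleaders

theorem isLocallyExponentiallyStable_neg_gradient_VF_add_VM {E : Finset (ℕ × ℕ)}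
    (hE : IsTLGraph n E) (hTF : ∀ t, IsAngleTriple E t → t ∈ TF)
    (hcos : ∀ t ∈ TF, angCosP Ptilde t = angCosP Pstar t)
    (hlt : ∀ i j k, (i, j, k) ∈ TF → i < n ∧ j < n ∧ k < n)
    (hneTF : ∀ i j k, (i, j, k) ∈ TF → edgeVector i j Ptilde ≠ 0 ∧ edgeVector i k Ptilde ≠ 0)
    (hne : ∀ i j, (i, j) ∈ E → edgeVector i j Ptilde ≠ 0)
    (hnondeg : ∀ i j k, IsAngleTriple E (i, j, k) → (edgeRatio i j k Ptilde).im ≠ 0)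
    (hl₁ : l₁ < n) (hl₂ : l₂ < n) (hleaders : edgeVector l₁ l₂ Ptilde ≠ 0) :
    IsLocallyExponentiallyStable
      (fun P => -gradient (fun Q => VF TF Pstar Q + VM l₁ l₂ Ptilde Q) P)
      (AffineSubspace.mk' Ptilde (translations n)) := by
  have hsmooth : ContDiffAt ℝ 1 (maneuverResidual TF l₁ l₂ Pstar Ptilde) Ptilde :=
    contDiffAt_maneuverResidual hneTF
  simp only [VF_add_VM_eq_half_norm_sq]
  exact isLocallyExponentiallyStable_neg_gradient_half_norm_sq hsmooth (maneuverResidual_self hcos)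
    (ker_fderiv_maneuverResidual_le_translations hE hTF (hsmooth.differentiableAt one_ne_zero)
      hne hnondeg hl₁ hl₂ hleaders)
    fun P τ hτ => maneuverResidual_add_of_mem_translations hlt hl₁ hl₂ hτ P

end Residual

/-- under Assumption 1, the set `𝓔_M` of translates of
`p̃ = c*(I_n ⊗ R_o(θ*))p*` is locally exponentially stable for the gradient flow
`ṗ = −∇(V_F + V_M)(p)`: there is a neighborhood `N` of `𝓔_M` and constants
`C, λ > 0` such that every solution starting in `N` satisfies
`dist(p(t), 𝓔_M) ≤ C e^{−λt} dist(p(0), 𝓔_M)` for all `t ≥ 0` and converges to `𝓔_M`. -/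
theorem maneuver_gradient_flow_locally_exponentially_stable
    {n : ℕ} (hn : 3 ≤ n) (E : Finset (ℕ × ℕ))
    (hVtx : ∀ e ∈ E, e.1 < n ∧ e.2 < n)
    (hsym : ∀ e ∈ E, (e.2, e.1) ∈ E)
    (hirr : ∀ e ∈ E, e.1 ≠ e.2)
    (TF : Finset (ℕ × ℕ × ℕ))
    (hTF : ∀ t : ℕ × ℕ × ℕ, t ∈ TF ↔
      ((t.1, t.2.1) ∈ E ∧ (t.2.1, t.2.2) ∈ E ∧ (t.1, t.2.2) ∈ E ∧
        t.1 < t.2.2 ∧ t.2.1 < t.2.2))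
    (Pstar : Conf n)
    (hPs : ∀ e ∈ E, pt Pstar e.1 ≠ pt Pstar e.2)
    -- Assumption 1: a spanning triangulated Laman subgraph, strongly nondegenerate at p*
    (EL : Finset (ℕ × ℕ)) (hTL : IsTLGraph n EL) (hsub : ∀ e ∈ EL, e ∈ E)
    (hsnd : StronglyNondegP EL Pstar)
    (θstar : ℝ) (hθ : θstar ∈ Set.Ico 0 (2 * π))
    (cstar : ℝ) (hc : cstar ≠ 0)
    (Ptilde : Conf n)
    (hPt : ∀ (i : Fin n) (d : Fin 2),
      Ptilde (i, d) = cstar * (Ro θstar).mulVec (fun d' => Pstar (i, d')) d)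
    (l1 l2 : ℕ) (hl : (l1, l2) ∈ E)
    (EM : Set (Conf n))
    (hEM : EM = {P : Conf n | ∃ ξ : Vec2, ∀ (i : Fin n) (d : Fin 2),
      P (i, d) = Ptilde (i, d) + ξ d}) :
    ∃ N : Set (Conf n), IsOpen N ∧ EM ⊆ N ∧
      ∃ C > (0 : ℝ), ∃ lam > (0 : ℝ),
        ∀ sol : ℝ → Conf n, sol 0 ∈ N →
          (∀ t : ℝ, 0 ≤ t →
            HasDerivAt sol
              (-(gradient (fun P => VF TF Pstar P + VM l1 l2 Ptilde P) (sol t))) t) →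
          (∀ t : ℝ, 0 ≤ t →
            Metric.infDist (sol t) EM ≤
              C * Real.exp (-lam * t) * Metric.infDist (sol 0) EM) ∧
          Filter.Tendsto (fun t => Metric.infDist (sol t) EM) Filter.atTop (nhds 0) := by
  have hsimilar : ∀ i < n, position i Ptilde =
      cstar * Complex.exp (θstar * Complex.I) * position i Pstar :=
    fun i hi => position_eq_mul_of_rotation hPt hi
  have hw : (cstar : ℂ) * Complex.exp (θstar * Complex.I) ≠ 0 :=
    mul_ne_zero (Complex.ofReal_ne_zero.2 hc) (Complex.exp_ne_zero _)
  have hlt : ∀ i j k, (i, j, k) ∈ TF → i < n ∧ j < n ∧ k < n := fun i j k ht =>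
    ⟨(hVtx _ ((hTF _).1 ht).1).1, hVtx _ ((hTF _).1 ht).2.1⟩
  have hratio : ∀ i j k, (i, j, k) ∈ TF → edgeRatio i j k Ptilde = edgeRatio i j k Pstar :=
    fun i j k ht =>
      have ⟨hi, hj, hk⟩ := hlt i j k ht
      edgeRatio_eq_of_similar hw hsimilar hi hj hk
  have hedge : ∀ i j, (i, j) ∈ E → edgeVector i j Ptilde ≠ 0 := fun i j hij => by
    rw [edgeVector_eq_mul hsimilar (hVtx _ hij).1 (hVtx _ hij).2]
    exact mul_ne_zero hw (edgeVector_ne_zero (hPs _ hij))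
  have hEL : ∀ t, IsAngleTriple EL t → t ∈ TF := fun t ht => (hTF t).2 (ht.mono hsub)
  have hnondeg : ∀ i j k, IsAngleTriple EL (i, j, k) → (edgeRatio i j k Ptilde).im ≠ 0 :=
    fun i j k ht h => hsnd i j k ht.1 ht.2.1 ht.2.2.1
      (collinear_of_im_edgeRatio_eq_zero (hratio i j k (hEL _ ht) ▸ h))
  rw [hEM, ← coe_mk'_translations]
  exact isLocallyExponentiallyStable_neg_gradient_VF_add_VM hTL hEL
    (fun _ ht => angCosP_eq_of_edgeRatio_eq (hratio _ _ _ ht)) hlt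
    (fun i j k ht => ⟨hedge i j ((hTF _).1 ht).1, hedge i k ((hTF _).1 ht).2.2.1⟩)
    (fun i j hij => hedge i j (hsub _ hij)) hnondeg (hVtx _ hl).1 (hVtx _ hl).2 (hedge l1 l2 hl)
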